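/- The Fibonacci F-symbols are unitary in the following sense: for all labels i, j, k, ℓ, m, m' ∈ {1, τ}, Σ_n F^{ijm}_{kℓn} · F^{ijm'}_{kℓn} = [m = m'] · [(i,j,m) admissible] · [(k,ℓ,m) admissible], where [·] is 1 if the bracketed condition holds and 0 otherwise, and the sum runs over n ∈ {1, τ}. -/

import Mathlib

noncomputable section

/-- The golden ratio φ = (1+√5)/2. -/
def φ : ℝ := (1 + Real.sqrt 5) / 2

/-- A triple of Fibonacci labels (`false` = 1, `true` = τ) is admissible iff
the number of τ's among them is not exactly one. -/
def admissible (a b c : Bool) : Prop :=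
  ((if a then 1 else 0) + (if b then 1 else 0) + (if c then 1 else 0) : ℕ) ≠ 1

instance : ∀ a b c : Bool, Decidable (admissible a b c) := by
  intro a b c; unfold admissible; infer_instance

/-- The nontrivial 2×2 block of the Fibonacci F-move, indexed by labels. -/
def Mblock (m n : Bool) : ℝ :=
  if m then (if n then -(1 / φ) else 1 / Real.sqrt φ)
  else (if n then 1 / Real.sqrt φ else 1 / φ)

/-- The Fibonacci F-symbol F^{ijm}_{kℓn}. -/
def Fs (i j m k l n : Bool) : ℝ :=
  if admissible i j m ∧ admissible k l m ∧ admissible i l n ∧ admissible j k n then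
    (if i = true ∧ j = true ∧ k = true ∧ l = true then Mblock m n else 1)
  else 0

end

theorem phi_pos : 0 < φ := by
  unfold φ; positivity

theorem phi_sq : φ ^ 2 = φ + 1 := by
  have h : Real.sqrt 5 ^ 2 = 5 := Real.sq_sqrt (by norm_num)
  unfold φ; nlinarith

/-- The Fibonacci F-symbols are unitary:
Σ_n F^{ijm}_{kℓn} F^{ijm'}_{kℓn} = [m = m'] · [(i,j,m) admissible] · [(k,ℓ,m) admissible]. -/
theorem fib_F_unitary (i j k l m m' : Bool) :
    ∑ n : Bool, Fs i j m k l n * Fs i j m' k l n =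
      if m = m' ∧ admissible i j m ∧ admissible k l m then 1 else 0 := by
  have h1 : Real.sqrt φ * Real.sqrt φ = φ := Real.mul_self_sqrt phi_pos.le
  have h2 : Real.sqrt φ ≠ 0 := (Real.sqrt_pos.mpr phi_pos).ne'
  have h3 : φ ≠ 0 := phi_pos.ne'
  have h4 := phi_sq
  have e1 : 1 / Real.sqrt φ * (1 / Real.sqrt φ) = 1 / φ := by
    rw [div_mul_div_comm, h1, one_mul]
  have e2 : 1 / φ * (1 / φ) + 1 / φ = 1 := by
    field_simp
    linarith
  rw [Fintype.sum_bool]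
  cases i <;> cases j <;> cases k <;> cases l <;> cases m <;> cases m' <;>
    simp only [Fs, Mblock, admissible] <;> norm_num <;>
    simp only [one_div] at e1 e2 <;> linarith
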